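/- Let (x, y) ∈ E × E with w₁·δ < dist(x, ∂E) and w₁·δ < dist(y, ∂E). Then E[ĥₙ(x, y)] → h(x, y) = p(x) q(x, y) as n → ∞; that is, ĥₙ(x, y) is an asymptotically unbiased estimator of h(x, y). -/

import Mathlib

open MeasureTheory ProbabilityTheory Filter

noncomputable def iterK {S : Type*} [MeasurableSpace S] (R : S → Measure S) : ℕ → S → Measure S
  | 0, y => Measure.dirac y
  | n+1, y => (iterK R n y).bind R

lemma aux_ball {d : ℕ} (E : Set (EuclideanSpace ℝ (Fin d))) (hE : IsOpen E)
    (x : EuclideanSpace ℝ (Fin d)) (hx : x ∈ E) (s : ℝ) (hs : 0 < s)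
    (h : s < Metric.infDist x (frontier E)) : Metric.ball x s ⊆ E := by
  apply (convex_ball x s).isPreconnected.subset_of_closure_inter_subset hE
    ⟨x, Metric.mem_ball_self hs, hx⟩
  rintro z ⟨hz1, hz2⟩
  by_contra hz
  have hzf : z ∈ frontier E := by
    rw [hE.frontier_eq]; exact ⟨hz1, hz⟩
  have h1 := Metric.infDist_le_dist_of_mem (x := x) hzf
  rw [Metric.mem_ball, dist_comm] at hz2
  linarith

lemma aux_tv {V : Type*} [MeasurableSpace V] (ν π : Measure V) [IsProbabilityMeasure ν]
    [IsProbabilityMeasure π] (f : V → ℝ) (hf : Measurable f) (C : ℝ) (h0 : ∀ v, 0 ≤ f v)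
    (hC : ∀ v, f v ≤ C) (c : ℝ)
    (hc : ∀ B, MeasurableSet B → |(ν B).toReal - (π B).toReal| ≤ c) :
    |∫ v, f v ∂ν - ∫ v, f v ∂π| ≤ c * |C| := by
  have hI : ∀ (η : Measure V) [IsProbabilityMeasure η], Integrable f η := fun η _ =>
    Integrable.of_bound hf.aestronglyMeasurable C
      (Eventually.of_forall fun v => by rw [Real.norm_eq_abs, abs_of_nonneg (h0 v)]; exact hC v)
  have hM : ∀ (η : Measure V) [IsProbabilityMeasure η],
      IntegrableOn (fun t => η.real {a | t ≤ f a}) (Set.Ioc 0 C) := fun η _ => by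
    have ha : Antitone (fun t => η.real {a | t ≤ f a}) := fun s t hst =>
      measureReal_mono (fun a (ha : t ≤ f a) => le_trans hst ha)
    refine Integrable.of_bound ha.measurable.aestronglyMeasurable 1
      (Eventually.of_forall fun t => ?_)
    rw [Real.norm_eq_abs, abs_of_nonneg measureReal_nonneg]
    exact measureReal_le_one
  rw [(hI ν).integral_eq_integral_Ioc_meas_le (Eventually.of_forall h0) (Eventually.of_forall hC),
    (hI π).integral_eq_integral_Ioc_meas_le (Eventually.of_forall h0) (Eventually.of_forall hC),
    ← integral_sub (hM ν) (hM π)]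
  have hb : ∀ t ∈ Set.Ioc 0 C, ‖ν.real {a | t ≤ f a} - π.real {a | t ≤ f a}‖ ≤ c :=
    fun t _ => hc _ (measurableSet_le measurable_const hf)
  have h1 := norm_setIntegral_le_of_norm_le_const (μ := volume) (s := Set.Ioc 0 C) (by simp) hb
  rw [Real.norm_eq_abs] at h1
  refine h1.trans ?_
  have hc0 : 0 ≤ c := (abs_nonneg _).trans (hc ∅ MeasurableSet.empty)
  refine mul_le_mul_of_nonneg_left ?_ hc0
  simp only [Real.volume_real_Ioc, sub_zero]
  exact max_le (le_abs_self C) (abs_nonneg C)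

noncomputable def kern {d : ℕ} (K : EuclideanSpace ℝ (Fin d) → ℝ) (w : ℝ)
    (x u : EuclideanSpace ℝ (Fin d)) : ℝ := (w ^ d)⁻¹ * K (w⁻¹ • (u - x))

lemma kern_meas {d : ℕ} {K : EuclideanSpace ℝ (Fin d) → ℝ} (hK : Measurable K) (w : ℝ)
    (x : EuclideanSpace ℝ (Fin d)) : Measurable (kern K w x) := by
  unfold kern
  fun_prop

lemma kern_nonneg {d : ℕ} {K : EuclideanSpace ℝ (Fin d) → ℝ} (hK : ∀ z, 0 ≤ K z) {w : ℝ}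
    (hw : 0 < w) (x u : EuclideanSpace ℝ (Fin d)) : 0 ≤ kern K w x u :=
  mul_nonneg (by positivity) (hK _)

lemma kern_bdd {d : ℕ} {K : EuclideanSpace ℝ (Fin d) → ℝ} (hK : ∀ z, 0 ≤ K z) {w : ℝ}
    {CK : ℝ} (hb : ∀ z, K z ≤ CK)
    (hw : 0 < w) (x u : EuclideanSpace ℝ (Fin d)) : |kern K w x u| ≤ (w ^ d)⁻¹ * CK := by
  rw [abs_of_nonneg (kern_nonneg hK hw x u)]
  exact mul_le_mul_of_nonneg_left (hb _) (by positivity)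

lemma kern_supp {d : ℕ} {K : EuclideanSpace ℝ (Fin d) → ℝ} {δ : ℝ}
    (hs : Function.support K ⊆ Metric.ball 0 δ) {w : ℝ}
    (hw : 0 < w) (x u : EuclideanSpace ℝ (Fin d)) (hu : kern K w x u ≠ 0) :
    dist u x < w * δ := by
  have h1 : K (w⁻¹ • (u - x)) ≠ 0 := fun h => hu (by simp [kern, h])
  have h2 := hs h1
  rw [mem_ball_zero_iff, norm_smul, norm_inv, Real.norm_eq_abs, abs_of_pos hw,
    inv_mul_lt_iff₀ hw] at h2
  rwa [dist_eq_norm]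

lemma kern_integral {d : ℕ} {K : EuclideanSpace ℝ (Fin d) → ℝ} (hK : ∫ z, K z = 1) {w : ℝ}
    (hw : 0 < w) (x : EuclideanSpace ℝ (Fin d)) : ∫ u, kern K w x u = 1 := by
  unfold kern
  rw [integral_const_mul, integral_sub_right_eq_self (fun u => K (w⁻¹ • u)) x,
    Measure.integral_comp_inv_smul_of_nonneg _ _ hw.le, hK]
  simp
  field_simp

lemma kern_integrable {d : ℕ} {K : EuclideanSpace ℝ (Fin d) → ℝ} (hK : ∫ z, K z = 1) {w : ℝ}
    (hw : 0 < w) (x : EuclideanSpace ℝ (Fin d)) : Integrable (kern K w x) := by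
  by_contra h
  have := kern_integral hK hw x
  rw [integral_undef h] at this
  norm_num at this

lemma kern_approx {d : ℕ} {K : EuclideanSpace ℝ (Fin d) → ℝ} (hKm : Measurable K)
    (hK0 : ∀ z, 0 ≤ K z) (hK : ∫ z, K z = 1) {δ : ℝ}
    (hs : Function.support K ⊆ Metric.ball 0 δ) {w : ℝ}
    (hw : 0 < w) (x : EuclideanSpace ℝ (Fin d)) (f : EuclideanSpace ℝ (Fin d) → ℝ)
    (hf : Measurable f) (c η : ℝ) (h : ∀ u, dist u x < w * δ → |f u - c| ≤ η) :
    |(∫ u, kern K w x u * f u) - c| ≤ η := by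
  have hi := kern_integrable hK hw x
  have hpt : ∀ u, ‖kern K w x u * (f u - c)‖ ≤ kern K w x u * η := fun u => by
    by_cases h0 : kern K w x u = 0
    · simp [h0]
    · rw [norm_mul, Real.norm_eq_abs, abs_of_nonneg (kern_nonneg hK0 hw x u)]
      exact mul_le_mul_of_nonneg_left (h u (kern_supp hs hw x u h0)) (kern_nonneg hK0 hw x u)
  have hi2 : Integrable (fun u => kern K w x u * (f u - c)) :=
    Integrable.mono' (hi.mul_const η)
      ((kern_meas hKm w x).mul (hf.sub_const c)).aestronglyMeasurable (Eventually.of_forall hpt)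
  have e : ∫ u, kern K w x u * f u = (∫ u, kern K w x u * (f u - c)) + c := by
    have : (fun u => kern K w x u * f u)
        = fun u => kern K w x u * (f u - c) + kern K w x u * c := by ext u; ring
    rw [this, integral_add hi2 (hi.mul_const c), integral_mul_const, kern_integral hK hw x,
      one_mul]
  rw [e, add_sub_cancel_right]
  refine (norm_integral_le_of_norm_le (hi.mul_const η) (Eventually.of_forall hpt)).trans ?_
  rw [integral_mul_const, kern_integral hK hw x, one_mul]

lemma aux_tower {Ω : Type*} {m m0 : MeasurableSpace Ω} (P : Measure[m0] Ω) [IsProbabilityMeasure P]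
    (hm : m ≤ m0) (X Y G : Ω → ℝ) (hX : Measurable[m] X) (hY : Measurable Y) (CX CY : ℝ)
    (hXb : ∀ ω, |X ω| ≤ CX) (hYb : ∀ ω, |Y ω| ≤ CY) (hG : P[Y|m] =ᵐ[P] G) :
    ∫ ω, X ω * Y ω ∂P = ∫ ω, X ω * G ω ∂P := by
  have hYi : Integrable Y P := Integrable.of_bound hY.aestronglyMeasurable CY
    (Eventually.of_forall hYb)
  have hXY : Integrable (X * Y) P :=
    hYi.bdd_mul (c := CX) (hX.mono hm le_rfl).aestronglyMeasurable (Eventually.of_forall hXb)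
  have h1 := condExp_mul_of_stronglyMeasurable_left (m := m) hX.stronglyMeasurable hXY hYi
  have h2 := integral_condExp hm (f := X * Y) (μ := P)
  have h3 : ∫ ω, X ω * Y ω ∂P = ∫ ω, (X * Y) ω ∂P := rfl
  rw [h3, ← h2]
  refine integral_congr_ae ?_
  filter_upwards [h1, hG] with ω h4 h5
  rw [h4, Pi.mul_apply, h5]

lemma aux_cesaro (a : ℕ → ℝ) (L : ℝ) (h : Tendsto a atTop (nhds L)) :
    Tendsto (fun n : ℕ => (n:ℝ)⁻¹ * ∑ j ∈ Finset.Icc 1 (n+1), a j) atTop (nhds L) := by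
  have h1 : Tendsto (fun n => a (n+1)) atTop (nhds L) := (tendsto_add_atTop_iff_nat 1).2 h
  have h2 := h1.cesaro
  have h3 : Tendsto (fun n : ℕ => (n:ℝ)⁻¹ * a (n+1)) atTop (nhds (0 * L)) :=
    tendsto_inv_atTop_nhds_zero_nat.mul h1
  have h4 := h2.add h3
  rw [zero_mul, add_zero] at h4
  refine h4.congr fun n => ?_
  rw [← mul_add, ← Finset.sum_range_succ (fun i => a (i+1)), Finset.range_eq_Ico,
    Finset.sum_Ico_add' a 0 (n+1) 1]
  congr 1

lemma iterK_meas {S : Type*} [MeasurableSpace S] (R : S → Measure S) (hR : Measurable R) (n : ℕ) :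
    Measurable (iterK R n) := by
  induction n with
  | zero => exact Measure.measurable_dirac
  | succ n ih => exact (Measure.measurable_bind' hR).comp ih

lemma iterK_prob {S : Type*} [MeasurableSpace S] (R : S → Measure S) (hR : Measurable R)
    (hp : ∀ s, IsProbabilityMeasure (R s)) (n : ℕ) (s : S) :
    IsProbabilityMeasure (iterK R n s) := by
  induction n with
  | zero => exact Measure.dirac.isProbabilityMeasure
  | succ n ih =>
    constructor
    show ((iterK R n s).bind R) Set.univ = 1
    rw [Measure.bind_apply MeasurableSet.univ hR.aemeasurable]
    simp

lemma aux_law {V Ω : Type*} [MeasurableSpace V] [MeasurableSpace Ω] (P : Measure Ω)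
    [IsProbabilityMeasure P] (Zm : ℕ → Ω → V) (hZ : ∀ n, Measurable (Zm n))
    (R : V → Measure V) (hR : Measurable R) (hRp : ∀ s, IsProbabilityMeasure (R s))
    (hM : ∀ n, 1 ≤ n → ∀ g : V → ℝ, Measurable g → (∃ C, ∀ u, |g u| ≤ C) →
      ∫ ω, g (Zm (n+1) ω) ∂P = ∫ ω, (∫ u, g u ∂(R (Zm n ω))) ∂P) (n : ℕ) :
    P.map (Zm (n+1)) = (P.map (Zm 1)).bind (iterK R n) := by
  induction n with
  | zero => 
    show _ = (P.map (Zm 1)).bind Measure.dirac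
    rw [Measure.bind_dirac]
  | succ n ih =>
    show _ = (P.map (Zm 1)).bind (fun y => (iterK R n y).bind R)
    rw [← Measure.bind_bind (iterK_meas R hR n).aemeasurable hR.aemeasurable, ← ih]
    ext B hB
    rw [Measure.bind_apply hB hR.aemeasurable, lintegral_map (f := fun v => R v B)
      ((Measure.measurable_coe hB).comp hR) (hZ _), Measure.map_apply (hZ _) hB]
    have h := hM (n+1) (by omega) (B.indicator 1) (measurable_one.indicator hB)
      ⟨1, fun u => by by_cases h : u ∈ B <;> simp [h]⟩
    have e1 : ∀ ω, (B.indicator (1 : V → ℝ)) (Zm (n+1+1) ω)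
        = ((Zm (n+1+1)) ⁻¹' B).indicator (1 : Ω → ℝ) ω := fun ω => rfl
    simp only [e1, integral_indicator_one hB] at h
    rw [integral_indicator_one (hZ _ hB)] at h
    have hfin : ∫⁻ ω, (R (Zm (n+1) ω)) B ∂P ≠ ⊤ := by
      refine ne_of_lt (lt_of_le_of_lt (lintegral_mono (g := fun _ => 1) fun ω => prob_le_one) ?_)
      simp
    rw [← ENNReal.toReal_eq_toReal_iff' (measure_ne_top _ _) hfin]
    rw [← integral_toReal]
    · exact h
    · exact (((Measure.measurable_coe hB).comp hR).comp (hZ _)).aemeasurable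
    · exact Eventually.of_forall fun ω => measure_lt_top _ _

lemma aux_law_tv {V Ω : Type*} [MeasurableSpace V] [MeasurableSpace Ω] (P : Measure Ω)
    [IsProbabilityMeasure P] (X : Ω → V) (hX : Measurable X) (N : V → Measure V)
    (hN : Measurable N) (hNp : ∀ s, IsProbabilityMeasure (N s)) (π : Measure V) (c : ℝ)
    (B : Set V) (hB : MeasurableSet B)
    (h : ∀ ω, |(N (X ω) B).toReal - (π B).toReal| ≤ c) :
    |(((P.map X).bind N) B).toReal - (π B).toReal| ≤ c := by
  rw [Measure.bind_apply hB hN.aemeasurable, lintegral_map (f := fun v => N v B)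
    ((Measure.measurable_coe hB).comp hN) hX]
  have hm : Measurable (fun ω => N (X ω) B) := ((Measure.measurable_coe hB).comp hN).comp hX
  rw [← integral_toReal hm.aemeasurable (Eventually.of_forall fun ω => measure_lt_top _ _)]
  have hi : Integrable (fun ω => (N (X ω) B).toReal) P :=
    Integrable.of_bound hm.ennreal_toReal.aestronglyMeasurable 1
      (Eventually.of_forall fun ω => by
        rw [Real.norm_eq_abs, abs_of_nonneg ENNReal.toReal_nonneg]
        exact measureReal_le_one)
  have e : ∫ ω, (N (X ω) B).toReal ∂P - (π B).toReal
      = ∫ ω, ((N (X ω) B).toReal - (π B).toReal) ∂P := by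
    rw [integral_sub hi (integrable_const _)]; simp
  rw [e]
  have := norm_integral_le_of_norm_le_const (μ := P) (C := c)
    (f := fun ω => (N (X ω) B).toReal - (π B).toReal) (Eventually.of_forall h)
  simpa using this

lemma aux_dens {d : ℕ} (η : Measure (EuclideanSpace ℝ (Fin d)))
    (E : Set (EuclideanSpace ℝ (Fin d))) (hE : MeasurableSet E)
    (f : EuclideanSpace ℝ (Fin d) → ℝ) (hf : Measurable f) (hf0 : ∀ z, 0 ≤ f z)
    (h : ∀ B ⊆ E, MeasurableSet B → η B = ∫⁻ z in B, ENNReal.ofReal (f z))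
    (g : EuclideanSpace ℝ (Fin d) → ℝ) (hg : ∀ z, z ∉ E → g z = 0) :
    ∫ z, g z ∂η = ∫ z, g z * f z := by
  have h1 : η.restrict E = (volume.restrict E).withDensity (fun z => ENNReal.ofReal (f z)) := by
    ext B hB
    rw [Measure.restrict_apply hB, withDensity_apply _ hB, Measure.restrict_restrict hB]
    exact h _ Set.inter_subset_right (hB.inter hE)
  rw [← setIntegral_eq_integral_of_forall_compl_eq_zero hg, h1,
    integral_withDensity_eq_integral_toReal_smul hf.ennreal_ofReal (by simp)]
  rw [← setIntegral_eq_integral_of_forall_compl_eq_zero (s := E) (f := fun z => g z * f z)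
    (fun z hz => by simp [hg z hz])]
  refine integral_congr_ae (Eventually.of_forall fun z => ?_)
  simp [ENNReal.toReal_ofReal (hf0 z), mul_comm]

theorem stmt14
    {d : ℕ} (hd : 1 ≤ d)
    {Ω : Type*} [MeasurableSpace Ω] (P : Measure Ω) [IsProbabilityMeasure P]
    (E : Set (EuclideanSpace ℝ (Fin d))) (hEopen : IsOpen E) (hEne : E.Nonempty)
    (Zm : ℕ → Ω → (EuclideanSpace ℝ (Fin d))) (hZmmeas : ∀ n, Measurable (Zm n))
    (hZmmem : ∀ n, 1 ≤ n → ∀ ω, Zm n ω ∈ closure E)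
    (R : (EuclideanSpace ℝ (Fin d)) → Measure (EuclideanSpace ℝ (Fin d))) (hRprob : ∀ ξ, IsProbabilityMeasure (R ξ))
    (hRkermeas : ∀ B : Set (EuclideanSpace ℝ (Fin d)), MeasurableSet B → Measurable fun ξ => R ξ B)
    (hMarkov : ∀ n, 1 ≤ n → ∀ g : (EuclideanSpace ℝ (Fin d)) → ℝ, Measurable g → (∃ C, ∀ u, |g u| ≤ C) →
      P[fun ω => g (Zm (n+1) ω)|⨆ i : Fin n, MeasurableSpace.comap (Zm (i.1+1)) inferInstance]
        =ᵐ[P] fun ω => ∫ u, g u ∂(R (Zm n ω)))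
    (μ : Measure (EuclideanSpace ℝ (Fin d))) (hμprob : IsProbabilityMeasure μ)
    (ε : ℝ) (hε : 0 < ε) (k : ℕ) (hk : 1 ≤ k)
    (hDoeblin : ∀ ξ ∈ closure E, ∀ B : Set (EuclideanSpace ℝ (Fin d)), MeasurableSet B →
      ENNReal.ofReal ε * μ B ≤ iterK R k ξ B)
    (π : Measure (EuclideanSpace ℝ (Fin d))) (hπprob : IsProbabilityMeasure π)
    (hπinv : ∀ B : Set (EuclideanSpace ℝ (Fin d)), MeasurableSet B → π B = ∫⁻ ξ, R ξ B ∂π)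
    (κ ρ : ℝ) (hκ : 0 < κ) (hρ : 1 < ρ)
    (hTV : ∀ n : ℕ, 1 ≤ n → ∀ ξ ∈ closure E, ∀ B : Set (EuclideanSpace ℝ (Fin d)), MeasurableSet B →
      |(iterK R n ξ B).toReal - (π B).toReal| ≤ κ * ρ ^ (-(n:ℝ)))
    (r : (EuclideanSpace ℝ (Fin d)) → (EuclideanSpace ℝ (Fin d)) → ℝ) (hrmeas : Measurable (Function.uncurry r)) (hrnonneg : ∀ a b, 0 ≤ r a b)
    (Cr : ℝ) (hrbdd : ∀ a b, r a b ≤ Cr)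
    (rLip : ℝ) (hrLip : ∀ a : (EuclideanSpace ℝ (Fin d)), ∀ b ∈ E, ∀ b' ∈ E, |r a b' - r a b| ≤ rLip * dist b' b)
    (hRdens : ∀ ξ ∈ closure E, ∀ B : Set (EuclideanSpace ℝ (Fin d)), B ⊆ E → MeasurableSet B →
      R ξ B = ∫⁻ z in B, ENNReal.ofReal (r ξ z) ∂volume)
    (p : (EuclideanSpace ℝ (Fin d)) → ℝ) (hp : ∀ z ∈ E, p z = ∫ u, r u z ∂π)
    (K : (EuclideanSpace ℝ (Fin d)) → ℝ) (hKmeas : Measurable K) (hKnonneg : ∀ z, 0 ≤ K z)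
    (CK : ℝ) (hKbdd : ∀ z, K z ≤ CK) (hKint : ∫ z, K z ∂volume = 1)
    (δ : ℝ) (hδ : 0 < δ) (hKsupp : Function.support K ⊆ Metric.ball 0 δ)
    (Z : ℕ → Ω → (EuclideanSpace ℝ (Fin d))) (hZmeas : ∀ n, Measurable (Z n)) (hZmem : ∀ n, 1 ≤ n → ∀ ω, Z n ω ∈ E)
    (Qm : (EuclideanSpace ℝ (Fin d)) → Measure (EuclideanSpace ℝ (Fin d))) (hQprob : ∀ ξ, IsProbabilityMeasure (Qm ξ))
    (q : (EuclideanSpace ℝ (Fin d)) → (EuclideanSpace ℝ (Fin d)) → ℝ) (hqmeas : Measurable (Function.uncurry q)) (hqnonneg : ∀ a b, 0 ≤ q a b)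
    (Cq : ℝ) (hqbdd : ∀ a b, q a b ≤ Cq)
    (qLip : ℝ) (hqLip1 : ∀ a b b' : (EuclideanSpace ℝ (Fin d)), |q a b' - q a b| ≤ qLip * dist b' b)
    (hqLip2 : ∀ a a' b : (EuclideanSpace ℝ (Fin d)), |q a' b - q a b| ≤ qLip * dist a' a)
    (hQdens : ∀ ξ : (EuclideanSpace ℝ (Fin d)), ∀ B : Set (EuclideanSpace ℝ (Fin d)), MeasurableSet B →
      Qm ξ B = ∫⁻ z in B, ENNReal.ofReal (q ξ z) ∂volume)
    (hZcond : ∀ n, 1 ≤ n → ∀ g : (EuclideanSpace ℝ (Fin d)) → ℝ, Measurable g → (∃ C, ∀ u, |g u| ≤ C) →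
      P[fun ω => g (Z n ω)|(⨆ i : Fin n, MeasurableSpace.comap (Zm (i.1+1)) inferInstance) ⊔
          (⨆ i : Fin (n-1), MeasurableSpace.comap (Z (i.1+1)) inferInstance)]
        =ᵐ[P] fun ω => ∫ u, g u ∂(Qm (Zm n ω)))
    (w1 Beta : ℝ) (hw1 : 0 < w1) (hBeta : 0 < Beta)
    (w : ℕ → ℝ) (hw : ∀ j : ℕ, w j = w1 * (j:ℝ) ^ (-Beta))
    (x y : (EuclideanSpace ℝ (Fin d))) (hx : x ∈ E) (hy : y ∈ E)
    (hxdist : w1 * δ < Metric.infDist x (frontier E))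
    (hydist : w1 * δ < Metric.infDist y (frontier E)) :
    Tendsto (fun n : ℕ => ∫ ω, ((n:ℝ)⁻¹ * ∑ j ∈ Finset.Icc 1 (n+1), ((w j) ^ (2*d))⁻¹ * (K ((w j)⁻¹ • (Zm j ω - x)) * K ((w j)⁻¹ • (Z j ω - y)))) ∂P) atTop (nhds (p x * q x y)) := by
  
  have hRm : Measurable R := Measure.measurable_of_measurable_coe _ hRkermeas
  have hmle : ∀ n, (⨆ i : Fin n, MeasurableSpace.comap (Zm (i.1+1)) inferInstance)
      ≤ (inferInstance : MeasurableSpace Ω) := fun n =>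
    iSup_le fun i => (hZmmeas _).comap_le
  have hmle2 : ∀ n, ((⨆ i : Fin n, MeasurableSpace.comap (Zm (i.1+1)) inferInstance) ⊔
          (⨆ i : Fin (n-1), MeasurableSpace.comap (Z (i.1+1)) inferInstance))
      ≤ (inferInstance : MeasurableSpace Ω) := fun n =>
    sup_le (hmle n) (iSup_le fun i => (hZmeas _).comap_le)
  -- Markov step in expectation
  have hM : ∀ n, 1 ≤ n → ∀ g : (EuclideanSpace ℝ (Fin d)) → ℝ, Measurable g →
      (∃ C, ∀ u, |g u| ≤ C) →
      ∫ ω, g (Zm (n+1) ω) ∂P = ∫ ω, (∫ u, g u ∂(R (Zm n ω))) ∂P := by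
    intro n hn g hg hgb
    rw [← integral_condExp (hmle n)]
    exact integral_congr_ae (hMarkov n hn g hg hgb)
  have hlaw := aux_law P Zm hZmmeas R hRm hRprob hM
  -- convergence of the expected transition density
  have hpconv : Tendsto (fun n => ∫ ω, r (Zm (n+1) ω) x ∂P) atTop (nhds (p x)) := by
    have hrx : Measurable (fun u => r u x) :=
      hrmeas.comp (measurable_id.prodMk measurable_const)
    rw [tendsto_iff_dist_tendsto_zero]
    have hb : ∀ n : ℕ, 1 ≤ n → dist (∫ ω, r (Zm (n+1) ω) x ∂P) (p x)
        ≤ κ * ρ ^ (-(n:ℝ)) * |Cr| := by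
      intro n hn
      have e : ∫ ω, r (Zm (n+1) ω) x ∂P = ∫ u, r u x ∂(P.map (Zm (n+1))) :=
        (integral_map (hZmmeas _).aemeasurable hrx.aestronglyMeasurable).symm
      have : IsProbabilityMeasure (P.map (Zm (n+1))) :=
        Measure.isProbabilityMeasure_map (hZmmeas _).aemeasurable
      rw [e, hp x hx, Real.dist_eq]
      refine aux_tv _ _ _ hrx Cr (fun v => hrnonneg _ _) (fun v => hrbdd _ _) _ ?_
      intro B hB
      rw [hlaw n]
      exact aux_law_tv P (Zm 1) (hZmmeas 1) (iterK R n) (iterK_meas R hRm n)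
        (iterK_prob R hRm hRprob n) π _ B hB
        (fun ω => hTV n hn _ (hZmmem 1 le_rfl ω) B hB)
    have hlim : Tendsto (fun n : ℕ => κ * ρ ^ (-(n:ℝ)) * |Cr|) atTop (nhds 0) := by
      have h1 : Tendsto (fun n : ℕ => (ρ⁻¹) ^ n) atTop (nhds 0) :=
        tendsto_pow_atTop_nhds_zero_of_lt_one (by positivity) (inv_lt_one_of_one_lt₀ hρ)
      have h2 := (h1.const_mul κ).mul_const |Cr|
      rw [mul_zero, zero_mul] at h2
      refine h2.congr fun n => ?_
      rw [Real.rpow_neg (by linarith), Real.rpow_natCast, inv_pow]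
    exact squeeze_zero' (Eventually.of_forall fun n => dist_nonneg)
      (eventually_atTop.2 ⟨1, hb⟩) hlim
  -- bandwidths
  have hwpos : ∀ j : ℕ, 1 ≤ j → 0 < w j := fun j hj => by
    rw [hw]
    have : (0:ℝ) < j := by exact_mod_cast hj
    positivity
  have hwle : ∀ j : ℕ, 1 ≤ j → w j ≤ w1 := fun j hj => by
    rw [hw]
    have h1 : (1:ℝ) ≤ j := by exact_mod_cast hj
    have : (j:ℝ) ^ (-Beta) ≤ 1 := Real.rpow_le_one_of_one_le_of_nonpos h1 (by linarith)
    nlinarith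
  have hwlim : Tendsto w atTop (nhds 0) := by
    have h1 := ((tendsto_rpow_neg_atTop hBeta).comp tendsto_natCast_atTop_atTop).const_mul w1
    rw [mul_zero] at h1
    exact h1.congr fun j => (hw j).symm
  have hball := aux_ball E hEopen x hx (w1 * δ) (by positivity) hxdist
  let F : ℝ → EuclideanSpace ℝ (Fin d) → ℝ := fun s u => ∫ v, kern K s y v * q u v
  have hFm : ∀ s, Measurable (F s) := fun s => by
    have h1 : Measurable (Function.uncurry fun (u v : EuclideanSpace ℝ (Fin d)) =>
        kern K s y v * q u v) := ((kern_meas hKmeas s y).comp measurable_snd).mul hqmeas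
    exact (h1.stronglyMeasurable.integral_prod_right).measurable
  have hqu : ∀ u, Measurable (q u) := fun u => hqmeas.comp measurable_prodMk_left
  have hru : ∀ u, Measurable (r u) := fun u => hrmeas.comp measurable_prodMk_left
  have hCq : 0 ≤ Cq := (hqnonneg x y).trans (hqbdd x y)
  have hCr : 0 ≤ Cr := (hrnonneg x y).trans (hrbdd x y)
  have hFb : ∀ s, 0 < s → ∀ u, |F s u| ≤ Cq := fun s hs u => by
    have := kern_approx hKmeas hKnonneg hKint hKsupp hs y (q u) (hqu u) 0 Cq (fun v _ => by
      rw [sub_zero, abs_of_nonneg (hqnonneg _ _)]; exact hqbdd _ _)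
    simpa using this
  have hFa : ∀ s, 0 < s → ∀ u, dist u x < s * δ → |F s u - q x y| ≤ 2 * |qLip| * (s * δ) := by
    intro s hs u hu
    refine kern_approx hKmeas hKnonneg hKint hKsupp hs y (q u) (hqu u) (q x y) _ (fun v hv => ?_)
    have h1 := hqLip1 u y v
    have h2 := hqLip2 x u y
    have h3 : qLip * dist v y ≤ |qLip| * (s * δ) :=
      mul_le_mul (le_abs_self _) hv.le dist_nonneg (abs_nonneg _)
    have h4 : qLip * dist u x ≤ |qLip| * (s * δ) :=
      mul_le_mul (le_abs_self _) hu.le dist_nonneg (abs_nonneg _)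
    have h5 := abs_sub_le (q u v) (q u y) (q x y)
    linarith
  -- the one-step kernel estimate
  have hstep : ∀ s, 0 < s → s ≤ w1 → ∀ ξ ∈ closure E,
      |(∫ u, kern K s x u * F s u ∂(R ξ)) - r ξ x * q x y|
        ≤ s * (Cr * (2 * |qLip| * δ) + Cq * (|rLip| * δ)) := by
    intro s hs hs1 ξ hξ
    have hE : ∀ u, dist u x < s * δ → u ∈ E := fun u hu => hball (by
      rw [Metric.mem_ball]
      exact lt_of_lt_of_le hu (mul_le_mul_of_nonneg_right hs1 hδ.le))
    rw [aux_dens (R ξ) E hEopen.measurableSet (r ξ) (hru ξ) (hrnonneg ξ)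
      (fun B hB hBm => hRdens ξ hξ B hB hBm) (fun u => kern K s x u * F s u) (fun u hu => by
        by_cases h0 : kern K s x u = 0
        · simp [h0]
        · exact absurd (hE u (kern_supp hKsupp hs x u h0)) hu)]
    simp only [mul_assoc]
    refine kern_approx hKmeas hKnonneg hKint hKsupp hs x (fun u => F s u * r ξ u)
      ((hFm s).mul (hru ξ)) (r ξ x * q x y) _ (fun u hu => ?_)
    have e : F s u * r ξ u - r ξ x * q x y
        = (F s u - q x y) * r ξ u + q x y * (r ξ u - r ξ x) := by ring
    have h1 := hFa s hs u hu
    have h2 := hrLip ξ x hx u (hE u hu)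
    have h3 : rLip * dist u x ≤ |rLip| * (s * δ) :=
      mul_le_mul (le_abs_self _) hu.le dist_nonneg (abs_nonneg _)
    show |F s u * r ξ u - r ξ x * q x y| ≤ _
    rw [e]
    refine (abs_add_le _ _).trans ?_
    rw [abs_mul, abs_mul, abs_of_nonneg (hrnonneg ξ u), abs_of_nonneg (hqnonneg x y)]
    have h4 : |F s u - q x y| * r ξ u ≤ 2 * |qLip| * (s * δ) * Cr :=
      mul_le_mul h1 (hrbdd _ _) (hrnonneg _ _) (by positivity)
    have h5 : q x y * |r ξ u - r ξ x| ≤ Cq * (|rLip| * (s * δ)) :=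
      mul_le_mul (hqbdd _ _) (h2.trans h3) (abs_nonneg _) hCq
    refine (add_le_add h4 h5).trans (le_of_eq (by ring))
  let a : ℕ → ℝ := fun j => ∫ ω, kern K (w j) x (Zm j ω) * kern K (w j) y (Z j ω) ∂P
  have ha1 : ∀ j, 1 ≤ j → a j = ∫ ω, kern K (w j) x (Zm j ω) * F (w j) (Zm j ω) ∂P := by
    intro j hj
    have hwj := hwpos j hj
    refine aux_tower P (hmle2 j) (fun ω => kern K (w j) x (Zm j ω))
      (fun ω => kern K (w j) y (Z j ω)) (fun ω => F (w j) (Zm j ω)) ?_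
      ((kern_meas hKmeas _ _).comp (hZmeas j)) _ _
      (fun ω => kern_bdd hKnonneg hKbdd hwj x _) (fun ω => kern_bdd hKnonneg hKbdd hwj y _) ?_
    · refine (kern_meas hKmeas _ _).comp ?_
      have h1 : Measurable[MeasurableSpace.comap (Zm j) inferInstance] (Zm j) :=
        comap_measurable _
      refine h1.mono (le_trans ?_ le_sup_left) le_rfl
      have h2 := le_iSup (fun i : Fin j => MeasurableSpace.comap (Zm (i.1+1))
        (inferInstance : MeasurableSpace (EuclideanSpace ℝ (Fin d)))) ⟨j-1, by omega⟩
      have h3 : j - 1 + 1 = j := by omega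
      simp only [h3] at h2
      exact h2
    · refine (hZcond j hj (kern K (w j) y) (kern_meas hKmeas _ _)
        ⟨_, kern_bdd hKnonneg hKbdd hwj y⟩).trans (Eventually.of_forall fun ω => ?_)
      exact aux_dens _ Set.univ MeasurableSet.univ (q (Zm j ω)) (hqu _) (hqnonneg _)
        (fun B _ hB => hQdens _ B hB) _ (fun z hz => absurd (Set.mem_univ z) hz)
  have ha2 : ∀ n, dist (a (n+1+1)) ((∫ ω, r (Zm (n+1) ω) x ∂P) * q x y)
      ≤ w (n+1+1) * (Cr * (2 * |qLip| * δ) + Cq * (|rLip| * δ)) := by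
    intro n
    have hwj := hwpos (n+1+1) (by omega)
    have hgm : Measurable (fun u => kern K (w (n+1+1)) x u * F (w (n+1+1)) u) :=
      (kern_meas hKmeas _ _).mul (hFm _)
    have hgb : ∀ u, |kern K (w (n+1+1)) x u * F (w (n+1+1)) u|
        ≤ ((w (n+1+1)) ^ d)⁻¹ * CK * Cq := fun u => by
      rw [abs_mul]
      exact mul_le_mul (kern_bdd hKnonneg hKbdd hwj x u) (hFb _ hwj u) (abs_nonneg _)
        ((abs_nonneg _).trans (kern_bdd hKnonneg hKbdd hwj x u))
    rw [ha1 _ (by omega), hM (n+1) (by omega)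
      (fun u => kern K (w (n+1+1)) x u * F (w (n+1+1)) u) hgm ⟨_, hgb⟩]
    have hi1 : Integrable (fun ω => ∫ u, kern K (w (n+1+1)) x u * F (w (n+1+1)) u
        ∂(R (Zm (n+1) ω))) P :=
      (integrable_condExp (μ := P)).congr (hMarkov (n+1) (by omega) _ hgm ⟨_, hgb⟩)
    have hi2 : Integrable (fun ω => r (Zm (n+1) ω) x * q x y) P := by
      refine Integrable.mul_const ?_ _
      refine Integrable.of_bound (hrmeas.comp
        ((hZmmeas (n+1)).prodMk measurable_const)).aestronglyMeasurable Cr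
        (Eventually.of_forall fun ω => ?_)
      rw [Real.norm_eq_abs, abs_of_nonneg]
      · exact hrbdd _ _
      · exact hrnonneg _ _
    rw [← integral_mul_const, dist_eq_norm, ← integral_sub hi1 hi2]
    have := norm_integral_le_of_norm_le_const (μ := P)
      (C := w (n+1+1) * (Cr * (2 * |qLip| * δ) + Cq * (|rLip| * δ)))
      (f := fun ω => (∫ u, kern K (w (n+1+1)) x u * F (w (n+1+1)) u ∂(R (Zm (n+1) ω)))
        - r (Zm (n+1) ω) x * q x y) (Eventually.of_forall fun ω =>
      hstep _ hwj (hwle (n+1+1) (by omega)) (Zm (n+1) ω) (hZmmem _ (by omega) ω))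
    simpa using this
  have halim : Tendsto a atTop (nhds (p x * q x y)) := by
    rw [← tendsto_add_atTop_iff_nat 2]
    have h1 := hpconv.mul_const (q x y)
    have h2 : Tendsto (fun n => w (n+1+1) * (Cr * (2 * |qLip| * δ) + Cq * (|rLip| * δ)))
        atTop (nhds 0) := by
      have := ((tendsto_add_atTop_iff_nat 2).2 hwlim).mul_const
        (Cr * (2 * |qLip| * δ) + Cq * (|rLip| * δ))
      rwa [zero_mul] at this
    have h3 := squeeze_zero (fun n => dist_nonneg) ha2 h2
    refine (tendsto_iff_of_dist (f₁ := fun n => (∫ ω, r (Zm (n+1) ω) x ∂P) * q x y) ?_).1 h1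
    simpa only [dist_comm] using h3
  refine (aux_cesaro a _ halim).congr fun n => ?_
  rw [integral_const_mul, integral_finsetSum]
  · congr 1
    refine Finset.sum_congr rfl fun j _ => ?_
    refine integral_congr_ae (Eventually.of_forall fun ω => ?_)
    simp only [kern]
    rw [two_mul, pow_add, mul_inv]
    ring
  · intro j hj
    have hj1 : 1 ≤ j := (Finset.mem_Icc.1 hj).1
    have hwj := hwpos j hj1
    refine Integrable.const_mul ?_ _
    refine Integrable.of_bound (C := CK * CK) (Measurable.aestronglyMeasurable ?_)
      (Eventually.of_forall fun ω => ?_)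
    · have h1 := hZmmeas j
      have h2 := hZmeas j
      fun_prop
    · rw [Real.norm_eq_abs, abs_mul, abs_of_nonneg (hKnonneg _), abs_of_nonneg (hKnonneg _)]
      exact mul_le_mul (hKbdd _) (hKbdd _) (hKnonneg _) ((hKnonneg 0).trans (hKbdd 0))
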